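/- For every real α ≥ 0, the difference d_↑(α) = d_ICCI(α) − d_IC(α) between the per-user degrees of freedom with and without the common message equals: α/2 if 0 ≤ α < 1/2; (2 − 3α)/2 if 1/2 ≤ α < 2/3; 0 if 2/3 ≤ α < 2; and (α − 2)/2 if α ≥ 2. Here d_ICCI(α) = sup{ (d0 + 2·d1)/2 : (d0, d1) ∈ D_sym(α) } and d_IC(α) = sup{ d1 : (0, d1) ∈ D_sym(α) }. -/

import Mathlib

/-!
Both suprema are attained, so each is a maximum with a closed form. For `dICCI`, the constraint on
`d0 + 2 * d1` is itself the objective, and it is met with equality at the corner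
`d1 = max 0 (1 - α)`, `d0 = max 1 α - d1`. For `dIC`, putting `d0 = 0` leaves only upper bounds on
`d1`, and the bound `d1 ≤ max 1 α` is implied by `d1 ≤ 1`. The piecewise formula is the difference
of the two closed forms.
-/

noncomputable section

/-- The region D_sym(α) for the symmetric Gaussian IC-CI, as a predicate on the
pair (d0, d1) (with d1 = d2). -/
def Dsym (α d0 d1 : ℝ) : Prop :=
  0 ≤ d0 ∧ 0 ≤ d1 ∧ d0 + d1 ≤ max 1 α ∧ d1 ≤ min 1 (max α (1 - α)) ∧
    d0 + 2 * d1 ≤ max 1 α + max 0 (1 - α)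

/-- The per-user GDoF with the common message. -/
def dICCI (α : ℝ) : ℝ :=
  sSup { x : ℝ | ∃ d0 d1 : ℝ, Dsym α d0 d1 ∧ x = (d0 + 2 * d1) / 2 }

/-- The per-user GDoF without the common message. -/
def dIC (α : ℝ) : ℝ := sSup { d1 : ℝ | Dsym α 0 d1 }

theorem dICCI_eq (α : ℝ) (hα : 0 ≤ α) :
    dICCI α = (max 1 α + max 0 (1 - α)) / 2 := by
  refine IsGreatest.csSup_eq ⟨⟨max 1 α - max 0 (1 - α), max 0 (1 - α), ?_, by ring⟩, ?_⟩
  · refine ⟨?_, le_max_left _ _, by linarith, ?_, by linarith⟩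
    · have h₁ : max 0 (1 - α) ≤ 1 := max_le zero_le_one (by linarith)
      linarith [le_max_left 1 α]
    · exact le_min (max_le zero_le_one (by linarith)) (max_le_max_right _ hα)
  · rintro x ⟨d0, d1, ⟨-, -, -, -, h⟩, rfl⟩
    linarith

theorem dIC_eq (α : ℝ) (hα : 0 ≤ α) :
    dIC α = min (min 1 (max α (1 - α))) ((max 1 α + max 0 (1 - α)) / 2) := by
  have h₁ : (1 : ℝ) ≤ max 1 α := le_max_left _ _
  have h₀ : (0 : ℝ) ≤ max 0 (1 - α) := le_max_left _ _
  refine IsGreatest.csSup_eq ⟨⟨le_rfl, ?_, ?_, min_le_left _ _, ?_⟩, ?_⟩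
  · exact le_min (le_min zero_le_one (hα.trans (le_max_left _ _))) (by linarith)
  · rw [zero_add]
    exact ((min_le_left _ _).trans (min_le_left _ _)).trans h₁
  · linarith [min_le_right (min 1 (max α (1 - α))) ((max 1 α + max 0 (1 - α)) / 2)]
  · rintro d1 ⟨-, -, -, h, h'⟩
    exact le_min h (by linarith)

/-- The GDoF improvement per user due to the common message over the symmetric
Gaussian IC-CI. -/
theorem dUp_formula (α : ℝ) (hα : 0 ≤ α) :
    dICCI α - dIC α =
      if α < 1/2 then α/2
      else if α < 2/3 then (2 - 3*α)/2
      else if α < 2 then 0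
      else (α - 2)/2 := by
  rw [dICCI_eq α hα, dIC_eq α hα]
  grind

end
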